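/- Let 0 ≤ δ < 1/2 and suppose C is a configuration such that for every endpoint c of C there is a radius ω > 0 with λ(C|I_ω(c)) ∉ [δ, 1−δ]. Then for every τ > 0 there exists a nontrivial measurable set S ⊆ ℝ that has no (δ+τ)-exceptional point. -/

import Mathlib

open MeasureTheory Set Filter

/-- The relative measure of `H` in the interval `(p - ε, p + ε)`,
i.e. `λ(H ∩ I_ε(p)) / (2ε)`. -/
noncomputable def relMeasure (H : Set ℝ) (p ε : ℝ) : ℝ :=
  (volume (H ∩ Ioo (p - ε) (p + ε))).toReal / (2 * ε)

/-- `p` is a `δ`-exceptional point for `S` if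
`δ ≤ liminf_{ε→0⁺} λ(S ∩ I_ε(p))/(2ε)` and `limsup_{ε→0⁺} λ(S ∩ I_ε(p))/(2ε) ≤ 1 - δ`. -/
def IsExceptionalPoint (S : Set ℝ) (δ p : ℝ) : Prop :=
  δ ≤ liminf (fun ε => relMeasure S p ε) (nhdsWithin 0 (Ioi 0)) ∧
  limsup (fun ε => relMeasure S p ε) (nhdsWithin 0 (Ioi 0)) ≤ 1 - δ

/-- A set `S ⊆ ℝ` is nontrivial if both `S` and its complement have positive measure. -/
def NontrivialSet (S : Set ℝ) : Prop := 0 < volume S ∧ 0 < volume Sᶜ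

/-- A configuration: a finite increasing sequence `0 < a 0 < b 0 < a 1 < ⋯ < a (r-1) < b (r-1)`
of positive reals. -/
structure Config where
  r : ℕ
  hr : 0 < r
  a : Fin r → ℝ
  b : Fin r → ℝ
  ha : ∀ i, 0 < a i
  hab : ∀ i, a i < b i
  hba : ∀ i j : Fin r, i < j → b i < a j

/-- The set `C = (-∞,0) ∪ ⋃ i (a i, b i)` associated to a configuration. -/
def Config.carrier (C : Config) : Set ℝ := Iio 0 ∪ ⋃ i, Ioo (C.a i) (C.b i)

/-- The endpoints of a configuration: `0` together with all the `a i` and `b i`. -/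
def Config.endpoints (C : Config) : Set ℝ := insert 0 (range C.a ∪ range C.b)

/-!
Around each endpoint of `C` paste a copy of `C` shrunk by a large factor `R` and oriented like the
jump of `C` there; around the endpoints of these copies paste copies shrunk by `R²`, and so on.
Suppose that the relative measures of the resulting set `S` around `p` stay in `[α, 1 - α]` at all
small scales. Then `p` lies near an endpoint `c` of `C`, since `S` is locally trivial elsewhere, and
the similarity that expands the copy at `c` to `S` gives another such point, whose scales are larger
by the factor `R`. After finitely many such steps we reach a point `y` with relative measures in
`[α, 1 - α]` at all scales up to a multiple of `R`. Now `y` is within `O(1 / R)` of an endpoint `c`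
and `S` agrees with `C` outside the `O(1 / R)`-neighbourhood of the endpoints, so the relative
measures of `S` around `y` and of `C` around `c` at the scale `ω` assigned to `c` differ by
`O(1 / R)`. The latter lies outside `[δ, 1 - δ]`, and because there are only finitely many
endpoints it lies outside `[θ, 1 - θ]` for some `θ < δ` independent of `c`. This is a contradiction
if `θ < α` and `R` is large; choosing `α < δ` excludes all `δ`-exceptional points.
-/

open Metric Bornology
open scoped Topology

section Frontier

variable {X : Type*} [TopologicalSpace X] {s C : Set X}

lemma subset_or_subset_compl_of_disjoint_frontier (hs : IsPreconnected s)
    (hC : Disjoint s (frontier C)) : s ⊆ C ∨ s ⊆ Cᶜ := by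
  have hcover : s ⊆ interior C ∪ interior Cᶜ := by
    rw [← compl_frontier_eq_union_interior]
    exact hC.subset_compl_right
  have hdisj : Disjoint (interior C) (interior Cᶜ) :=
    disjoint_compl_right.mono interior_subset interior_subset
  exact (hs.subset_or_subset isOpen_interior isOpen_interior hdisj hcover).imp
    (·.trans interior_subset) (·.trans interior_subset)

lemma eventually_mem_or_eventually_notMem_of_hasBasis {ι : Sort*} {l : Filter X} {p : ι → Prop}
    {b : ι → Set X} (hl : l.HasBasis p b) (hb : ∀ i, p i → IsPreconnected (b i))
    (hC : ∀ᶠ x in l, x ∉ frontier C) : (∀ᶠ x in l, x ∈ C) ∨ ∀ᶠ x in l, x ∉ C := by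
  obtain ⟨i, hi, hiC⟩ := hl.eventually_iff.1 hC
  exact (subset_or_subset_compl_of_disjoint_frontier (hb i hi)
    (disjoint_left.2 fun _ hx ↦ hiC hx)).imp
    (mem_of_superset (hl.mem_of_mem hi)) (mem_of_superset (hl.mem_of_mem hi))

lemma measurableSet_of_countable_frontier [MeasurableSpace X] [OpensMeasurableSpace X]
    [MeasurableSingletonClass X] (hC : (frontier C).Countable) : MeasurableSet C := by
  rw [← sdiff_union_inter C (frontier C), self_sdiff_frontier]
  exact isOpen_interior.measurableSet.union (hC.mono inter_subset_right).measurableSet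

end Frontier

section RelMeasure

variable {S T N : Set ℝ} {x y ε : ℝ}

lemma relMeasure_eq_measureReal_ball (S : Set ℝ) (x ε : ℝ) :
    relMeasure S x ε = volume.real (S ∩ ball x ε) / (2 * ε) := by
  rw [Real.ball_eq_Ioo]; rfl

lemma relMeasure_empty : relMeasure ∅ x ε = 0 := by simp [relMeasure]

lemma relMeasure_univ (hε : 0 < ε) : relMeasure univ x ε = 1 := by
  rw [relMeasure_eq_measureReal_ball, univ_inter, Real.volume_real_ball hε.le]
  exact div_self (by positivity)

lemma relMeasure_nonneg (hε : 0 < ε) : 0 ≤ relMeasure S x ε := by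
  unfold relMeasure; positivity

lemma relMeasure_le_one (hε : 0 < ε) : relMeasure S x ε ≤ 1 := by
  rw [← relMeasure_univ (x := x) hε, relMeasure_eq_measureReal_ball, relMeasure_eq_measureReal_ball]
  gcongr
  exacts [by finiteness, subset_univ S]

lemma relMeasure_congr (h : ∀ y ∈ ball x ε, y ≠ x → (y ∈ S ↔ y ∈ T)) :
    relMeasure S x ε = relMeasure T x ε := by
  have hae : (S ∩ ball x ε : Set ℝ) =ᵐ[volume] (T ∩ ball x ε : Set ℝ) := by
    filter_upwards [compl_mem_ae_iff.2 (measure_singleton x)] with y hy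
    exact propext (and_congr_left fun hyx ↦ h y hyx hy)
  rw [relMeasure_eq_measureReal_ball, relMeasure_eq_measureReal_ball, measureReal_congr hae]

lemma eventually_relMeasure_congr (h : ∀ᶠ y in 𝓝[≠] x, y ∈ S ↔ y ∈ T) :
    ∀ᶠ ε in 𝓝 0, relMeasure S x ε = relMeasure T x ε :=
  (eventually_ball_subset (eventually_nhdsWithin_iff.1 h)).mono fun _ hε ↦ relMeasure_congr hε

lemma relMeasure_preimage_mul_sub {k : ℝ} (hk : k ≠ 0) (S : Set ℝ) (c x ε : ℝ) :
    relMeasure ((fun y ↦ k * (y - c)) ⁻¹' S) x ε = relMeasure S (k * (x - c)) (|k| * ε) := by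
  have hball : (fun y ↦ k * (y - c)) ⁻¹' ball (k * (x - c)) (|k| * ε) = ball x ε := by
    ext y
    rw [mem_preimage, mem_ball, mem_ball, Real.dist_eq, Real.dist_eq, ← mul_sub,
      sub_sub_sub_cancel_right, abs_mul, mul_lt_mul_iff_right₀ (abs_pos.2 hk)]
  have hvolume (A : Set ℝ) :
      volume.real ((fun y ↦ k * (y - c)) ⁻¹' A) = |k|⁻¹ * volume.real A := by
    change (volume ((· - c) ⁻¹' ((k * ·) ⁻¹' A))).toReal = _
    simp only [sub_eq_add_neg]
    rw [measure_preimage_add_right, Real.volume_preimage_mul_left hk, ENNReal.toReal_mul,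
      ENNReal.toReal_ofReal (abs_nonneg _), abs_inv, measureReal_def]
  have := abs_pos.2 hk
  rw [relMeasure_eq_measureReal_ball, relMeasure_eq_measureReal_ball, ← hball, ← preimage_inter,
    hvolume]
  field_simp

lemma relMeasure_le_add_of_subset_union (hε : 0 < ε) (hST : S ⊆ T ∪ N) (hN : volume N ≠ ⊤) :
    relMeasure S x ε ≤ relMeasure T y ε + (volume.real N / 2 + |x - y|) / ε := by
  have hcover : S ∩ ball x ε ⊆
      T ∩ ball y ε ∪ (N ∪ (ball y (ε + |x - y|) \ ball y ε)) := by
    rintro z ⟨hzS, hzx⟩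
    have hzy : z ∈ ball y (ε + |x - y|) := ball_subset_ball' le_rfl hzx
    have := hST hzS
    simp only [mem_union, mem_inter_iff, Set.mem_sdiff] at this ⊢
    tauto
  have hshell : volume.real (ball y (ε + |x - y|) \ ball y ε) = 2 * |x - y| := by
    rw [measureReal_sdiff (ball_subset_ball (by simp)) measurableSet_ball,
      Real.volume_real_ball (by positivity), Real.volume_real_ball hε.le]
    ring
  have hTfin : volume (T ∩ ball y ε) ≠ ⊤ :=
    measure_ne_top_of_subset inter_subset_right measure_ball_lt_top.ne
  have hshellfin : volume (ball y (ε + |x - y|) \ ball y ε) ≠ ⊤ :=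
    measure_ne_top_of_subset sdiff_subset measure_ball_lt_top.ne
  have hmeasure : volume.real (S ∩ ball x ε) ≤
      volume.real (T ∩ ball y ε) + (volume.real N + 2 * |x - y|) := by
    calc volume.real (S ∩ ball x ε)
      _ ≤ volume.real (T ∩ ball y ε ∪ (N ∪ (ball y (ε + |x - y|) \ ball y ε))) :=
        measureReal_mono hcover (by finiteness)
      _ ≤ volume.real (T ∩ ball y ε) +
          (volume.real N + volume.real (ball y (ε + |x - y|) \ ball y ε)) :=
        (measureReal_union_le _ _).trans (by gcongr; exact measureReal_union_le _ _)
      _ = volume.real (T ∩ ball y ε) + (volume.real N + 2 * |x - y|) := by rw [hshell]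
  rw [relMeasure_eq_measureReal_ball, relMeasure_eq_measureReal_ball]
  calc volume.real (S ∩ ball x ε) / (2 * ε)
    _ ≤ (volume.real (T ∩ ball y ε) + (volume.real N + 2 * |x - y|)) / (2 * ε) := by gcongr
    _ = _ := by field_simp

lemma measureReal_biUnion_closedBall_le (F : Finset ℝ) {κ : ℝ} (hκ : 0 ≤ κ) :
    volume.real (⋃ c ∈ F, closedBall c κ) ≤ F.card * (2 * κ) := by
  refine (measureReal_biUnion_finset_le _ _).trans_eq ?_
  simp [Real.volume_real_closedBall hκ]

lemma pos_of_relMeasure_notMem_Icc {δ : ℝ} (hε : 0 < ε)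
    (h : relMeasure S x ε ∉ Icc δ (1 - δ)) : 0 < δ := by
  by_contra! hδ
  exact h ⟨hδ.trans (relMeasure_nonneg hε), (relMeasure_le_one hε).trans (by linarith)⟩

lemma exists_lt_forall_relMeasure_notMem_Icc {F : Set ℝ} (hF : F.Finite) {δ : ℝ}
    (h : ∀ c ∈ F, ∃ ω > 0, relMeasure S c ω ∉ Icc δ (1 - δ)) :
    ∃ θ < δ, ∀ c ∈ F, ∃ ω > 0, relMeasure S c ω ∉ Icc θ (1 - θ) := by
  have hev : ∀ᶠ θ in 𝓝[<] δ, ∀ c ∈ F, ∃ ω > 0, relMeasure S c ω ∉ Icc θ (1 - θ) := by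
    rw [eventually_all_finite hF]
    intro c hc
    obtain ⟨ω, hω, hωc⟩ := h c hc
    have hopen : IsOpen {θ : ℝ | relMeasure S c ω ∉ Icc θ (1 - θ)} := by
      simp only [mem_Icc, not_and_or, not_le]
      exact (isOpen_lt continuous_const continuous_id).union
        (isOpen_lt (continuous_const.sub continuous_id) continuous_const)
    exact nhdsWithin_le_nhds ((hopen.eventually_mem hωc).mono fun θ hθ ↦ ⟨ω, hω, hθ⟩)
  obtain ⟨θ, hθ, hθδ⟩ := (hev.and self_mem_nhdsWithin).exists
  exact ⟨θ, hθδ, hθ⟩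

end RelMeasure

lemma nontrivialSet_of_eventually_cobounded {S : Set ℝ}
    (h : ∀ᶠ x in cobounded ℝ, x ∈ S ↔ x < 0) : NontrivialSet S := by
  rw [IsOrderBornology.cobounded_eq, eventually_sup] at h
  obtain ⟨a, ha⟩ := (h.1.and (eventually_lt_atBot 0)).exists_forall_of_atBot
  obtain ⟨b, hb⟩ := (h.2.and (eventually_ge_atTop 0)).exists_forall_of_atTop
  have hleft : Iic a ⊆ S := fun x hx ↦ (ha x hx).1.2 (ha x hx).2
  have hright : Ici b ⊆ Sᶜ := fun x hx hxS ↦ (hb x hx).2.not_gt ((hb x hx).1.1 hxS)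
  exact ⟨(by simp : 0 < volume (Iic a)).trans_le (measure_mono hleft),
    (by simp : 0 < volume (Ici b)).trans_le (measure_mono hright)⟩

lemma NontrivialSet.nonempty_frontier {S : Set ℝ} (h : NontrivialSet S) :
    (frontier S).Nonempty :=
  nonempty_frontier_iff.2 ⟨nonempty_of_measure_ne_zero h.1.ne',
    nonempty_compl.1 (nonempty_of_measure_ne_zero h.2.ne')⟩

section Balanced

/-- The relative measures of `S` around `x` stay in `[α, 1 - α]` at all scales below `e`: the
quantitative form of exceptionality that survives zooming in. -/
def IsBalanced (S : Set ℝ) (α e x : ℝ) : Prop :=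
  ∀ ε ∈ Ioo 0 e, relMeasure S x ε ∈ Icc α (1 - α)

variable {S : Set ℝ} {α δ e e' x : ℝ}

lemma IsBalanced.mono (h : IsBalanced S α e x) (he : e' ≤ e) : IsBalanced S α e' x :=
  fun ε hε ↦ h ε ⟨hε.1, hε.2.trans_le he⟩

lemma IsExceptionalPoint.mono {δ' : ℝ} (h : IsExceptionalPoint S δ x) (hδ : δ' ≤ δ) :
    IsExceptionalPoint S δ' x :=
  ⟨hδ.trans h.1, h.2.trans (by linarith)⟩

lemma IsExceptionalPoint.exists_isBalanced (h : IsExceptionalPoint S δ x) (hα : α < δ) :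
    ∃ e > 0, IsBalanced S α e x := by
  have hbelow : IsBoundedUnder (· ≥ ·) (𝓝[>] 0) (relMeasure S x) :=
    isBoundedUnder_of_eventually_ge (eventually_mem_nhdsWithin.mono fun _ ↦ relMeasure_nonneg)
  have habove : IsBoundedUnder (· ≤ ·) (𝓝[>] 0) (relMeasure S x) :=
    isBoundedUnder_of_eventually_le (eventually_mem_nhdsWithin.mono fun _ ↦ relMeasure_le_one)
  have hlow : ∀ᶠ ε in 𝓝[>] 0, α < relMeasure S x ε :=
    eventually_lt_of_lt_liminf (hα.trans_le h.1) hbelow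
  have hhigh : ∀ᶠ ε in 𝓝[>] 0, relMeasure S x ε < 1 - α :=
    eventually_lt_of_limsup_lt (h.2.trans_lt (by linarith)) habove
  obtain ⟨e, he, hball⟩ := (nhdsGT_basis 0).eventually_iff.1 (hlow.and hhigh)
  exact ⟨e, he, fun ε hε ↦ ⟨(hball hε).1.le, (hball hε).2.le⟩⟩

lemma IsBalanced.exists_of_eventually (h : IsBalanced S α e x) (he : 0 < e) {T : Set ℝ}
    (hST : ∀ᶠ y in 𝓝[≠] x, y ∈ S ↔ y ∈ T) : ∃ ε > 0, relMeasure T x ε ∈ Icc α (1 - α) := by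
  have hcongr := (eventually_relMeasure_congr hST).filter_mono (nhdsWithin_le_nhds (s := Ioi 0))
  obtain ⟨ε, hε, hεe⟩ := (hcongr.and (Ioo_mem_nhdsGT he)).exists
  exact ⟨ε, hεe.1, hε ▸ h ε hεe⟩

lemma IsBalanced.frequently_mem (h : IsBalanced S α e x) (hα : 0 < α) (he : 0 < e) :
    ∃ᶠ y in 𝓝[≠] x, y ∈ S := by
  intro hS
  obtain ⟨ε, -, hmem⟩ := h.exists_of_eventually he (T := ∅) (by simpa using hS)
  rw [relMeasure_empty] at hmem
  exact hmem.1.not_gt hα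

lemma IsBalanced.frequently_notMem (h : IsBalanced S α e x) (hα : 0 < α) (he : 0 < e) :
    ∃ᶠ y in 𝓝[≠] x, y ∉ S := by
  intro hS
  obtain ⟨ε, hε, hmem⟩ := h.exists_of_eventually he (T := univ) (by simpa using hS)
  rw [relMeasure_univ hε] at hmem
  linarith [hmem.2]

end Balanced

section Jumps

variable {C : Set ℝ} {σ c : ℝ}

/-- The jump points of `C`: those approached both by `C` and by its complement. For a finite union
of intervals these are the endpoints, removable and isolated points being ignored. -/
def jumpSet (C : Set ℝ) : Set ℝ :=
  {c | (∃ᶠ x in 𝓝[≠] c, x ∈ C) ∧ ∃ᶠ x in 𝓝[≠] c, x ∉ C}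

/-- In a punctured neighbourhood of `c`, the set `C` is the half-line to the left of `c` (for
`σ = 1`) or to the right of `c` (for `σ = -1`). -/
def IsJump (C : Set ℝ) (σ c : ℝ) : Prop :=
  ∀ᶠ x in 𝓝[≠] c, x ∈ C ↔ σ * (x - c) < 0

lemma jumpSet_subset_frontier : jumpSet C ⊆ frontier C := by
  rintro c ⟨hmem, hnotMem⟩
  rw [frontier_eq_closure_inter_closure]
  exact ⟨mem_closure_of_frequently_of_tendsto hmem nhdsWithin_le_nhds,
    mem_closure_of_frequently_of_tendsto hnotMem nhdsWithin_le_nhds⟩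

lemma exists_isJump_of_mem_jumpSet (hC : (frontier C).Finite) (hc : c ∈ jumpSet C) :
    ∃ σ, |σ| = 1 ∧ IsJump C σ c := by
  have havoid : ∀ᶠ x in 𝓝[≠] c, x ∉ frontier C :=
    mem_of_superset (nhdsNE_of_nhdsNE_sdiff_finite univ_mem hC) fun _ hx ↦ hx.2
  have hleft := eventually_mem_or_eventually_notMem_of_hasBasis (nhdsLT_basis c)
    (fun _ _ ↦ isPreconnected_Ioo) (havoid.filter_mono (nhdsLT_le_nhdsNE c))
  have hright := eventually_mem_or_eventually_notMem_of_hasBasis (nhdsGT_basis c)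
    (fun _ _ ↦ isPreconnected_Ioo) (havoid.filter_mono (nhdsGT_le_nhdsNE c))
  obtain ⟨hmem, hnotMem⟩ := hc
  rw [← nhdsLT_sup_nhdsGT] at hmem hnotMem
  rcases hleft with hleft | hleft <;> rcases hright with hright | hright
  · exact absurd (eventually_sup.2 ⟨hleft, hright⟩) (not_eventually.2 hnotMem)
  · refine ⟨1, by simp, ?_⟩
    rw [IsJump, ← nhdsLT_sup_nhdsGT, eventually_sup]
    constructor
    · filter_upwards [hleft, self_mem_nhdsWithin] with x hx hxc using by simpa [hx] using hxc
    · filter_upwards [hright, self_mem_nhdsWithin] with x hx hxc using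
        by simpa [hx] using le_of_lt hxc
  · refine ⟨-1, by simp, ?_⟩
    rw [IsJump, ← nhdsLT_sup_nhdsGT, eventually_sup]
    constructor
    · filter_upwards [hleft, self_mem_nhdsWithin] with x hx hxc using
        by simpa [hx] using le_of_lt hxc
    · filter_upwards [hright, self_mem_nhdsWithin] with x hx hxc using by simpa [hx] using hxc
  · exact absurd (eventually_sup.2 ⟨hleft, hright⟩) hmem

end Jumps

/-- The geometry of a set `C` that has finitely many jumps and is a negative half-line far away:
its jump points, their orientations, a common radius of disjoint balls in which `C` is a half-line,
and a bound beyond which `C` is the negative half-line and these balls do not reach. -/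
structure JumpData (C : Set ℝ) where
  points : Finset ℝ
  sign : ℝ → ℝ
  radius : ℝ
  bound : ℝ
  mem_points : ∀ c, c ∈ points ↔ c ∈ jumpSet C
  abs_sign : ∀ c ∈ points, |sign c| = 1
  radius_pos : 0 < radius
  bound_pos : 0 < bound
  pairwiseDisjoint : (points : Set ℝ).PairwiseDisjoint (ball · radius)
  mem_iff_of_mem_ball : ∀ c ∈ points, ∀ x ∈ ball c radius, x ≠ c →
    (x ∈ C ↔ sign c * (x - c) < 0)
  mem_iff_of_bound_lt : ∀ x, bound < |x| → (x ∈ C ↔ x < 0)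
  notMem_ball_of_bound_lt : ∀ x, bound < |x| → ∀ c ∈ points, x ∉ ball c radius

namespace JumpData

theorem nonempty_of_finite_frontier {C : Set ℝ} (hC : (frontier C).Finite)
    (hfar : ∀ᶠ x in cobounded ℝ, x ∈ C ↔ x < 0) : Nonempty (JumpData C) := by
  have hfin : (jumpSet C).Finite := hC.subset jumpSet_subset_frontier
  have hjump : ∀ c, ∃ σ, c ∈ jumpSet C → |σ| = 1 ∧ IsJump C σ c := fun c ↦ by
    by_cases hc : c ∈ jumpSet C
    · exact (exists_isJump_of_mem_jumpSet hC hc).imp fun σ hσ _ ↦ hσ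
    · exact ⟨0, fun h ↦ absurd h hc⟩
  choose σ hσ using hjump
  have hnear : ∀ᶠ ρ in 𝓝 (0 : ℝ), ∀ c ∈ jumpSet C, ∀ x ∈ ball c ρ, x ≠ c →
      (x ∈ C ↔ σ c * (x - c) < 0) :=
    (eventually_all_finite hfin).2 fun c hc ↦
      eventually_ball_subset (eventually_nhdsWithin_iff.1 (hσ c hc).2)
  have hdisj : ∀ᶠ ρ in 𝓝 (0 : ℝ), (jumpSet C).PairwiseDisjoint (ball · ρ) :=
    (eventually_all_finite hfin).2 fun c _ ↦ (eventually_all_finite hfin).2 fun d _ ↦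
      eventually_imp_distrib_left.2 fun hcd ↦
        (eventually_lt_nhds (half_pos (dist_pos.2 hcd))).mono fun ρ hρ ↦
          ball_disjoint_ball (by linarith)
  obtain ⟨ρ, ⟨hnear, hdisj⟩, hρ⟩ := (((hnear.and hdisj).filter_mono
    (nhdsWithin_le_nhds (s := Ioi 0))).and self_mem_nhdsWithin).exists
  have houter : ∀ᶠ x in cobounded ℝ, (x ∈ C ↔ x < 0) ∧ ∀ c ∈ jumpSet C, x ∉ ball c ρ :=
    hfar.and ((eventually_all_finite hfin).2 fun c _ ↦ isBounded_def.1 isBounded_ball)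
  obtain ⟨M, -, hM⟩ := hasBasis_cobounded_norm.eventually_iff.1 houter
  have hM' : ∀ x : ℝ, max M 1 < |x| → M ≤ ‖x‖ := fun x hx ↦ (le_max_left _ _).trans hx.le
  have hpoints : ∀ c, c ∈ hfin.toFinset ↔ c ∈ jumpSet C := fun c ↦ hfin.mem_toFinset
  exact ⟨{
    points := hfin.toFinset
    sign := σ
    radius := ρ
    bound := max M 1
    mem_points := hpoints
    abs_sign := fun c hc ↦ (hσ c ((hpoints c).1 hc)).1
    radius_pos := hρ
    bound_pos := by positivity
    pairwiseDisjoint := by rwa [hfin.coe_toFinset]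
    mem_iff_of_mem_ball := fun c hc ↦ hnear c ((hpoints c).1 hc)
    mem_iff_of_bound_lt := fun x hx ↦ (hM (hM' x hx)).1
    notMem_ball_of_bound_lt := fun x hx c hc ↦ (hM (hM' x hx)).2 c ((hpoints c).1 hc) }⟩

variable {C : Set ℝ} (D : JumpData C) (R : ℝ)

/-- The expanding similarity of ratio `R` that carries the jump of `C` at `c` to the jump of
`(-∞, 0)` at `0`. -/
def zoom (c x : ℝ) : ℝ := R * D.sign c * (x - c)

/-- `C` with a copy of `S`, shrunk by the factor `R`, pasted around each jump point. -/
def graft (S : Set ℝ) : Set ℝ :=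
  (C \ ⋃ c ∈ D.points, ball c D.radius) ∪ ⋃ c ∈ D.points, ball c D.radius ∩ D.zoom R c ⁻¹' S

/-- The least fixed point of `D.graft R`: a set equal to `C` away from the jump points and
containing, around each of them, a copy of itself shrunk by the factor `R`. -/
def selfSimilarSet : Set ℝ := ⋃ n, (D.graft R)^[n] ∅

lemma graft_selfSimilarSet : D.graft R (D.selfSimilarSet R) = D.selfSimilarSet R := by
  have hcontinuous (u : ℕ → Set ℝ) : D.graft R (⋃ n, u n) = ⋃ n, D.graft R (u n) := by
    simp only [graft, preimage_iUnion, inter_iUnion, ← union_iUnion]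
    congr 1
    simp only [iUnion_comm (ι := ℕ)]
  rw [selfSimilarSet, hcontinuous, ← union_iUnion_nat_succ fun n ↦ (D.graft R)^[n] ∅]
  simp only [Function.iterate_succ_apply', Function.iterate_zero_apply, empty_union]

lemma measurableSet_selfSimilarSet (hC : MeasurableSet C) :
    MeasurableSet (D.selfSimilarSet R) := by
  refine MeasurableSet.iUnion fun n ↦ ?_
  induction n with
  | zero => exact MeasurableSet.empty
  | succ n ih =>
    rw [Function.iterate_succ_apply']
    refine (hC.diff (D.points.measurableSet_biUnion fun c _ ↦ measurableSet_ball)).union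
      (D.points.measurableSet_biUnion fun c _ ↦ measurableSet_ball.inter (ih.preimage ?_))
    unfold zoom
    fun_prop

variable {D R} {c x α e : ℝ}

lemma mem_selfSimilarSet_iff_of_forall_notMem_ball (hx : ∀ c ∈ D.points, x ∉ ball c D.radius) :
    x ∈ D.selfSimilarSet R ↔ x ∈ C := by
  rw [← graft_selfSimilarSet]
  simp +contextual [graft, hx]

lemma mem_selfSimilarSet_iff_zoom_mem (hc : c ∈ D.points) (hx : x ∈ ball c D.radius) :
    x ∈ D.selfSimilarSet R ↔ D.zoom R c x ∈ D.selfSimilarSet R := by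
  have hunique : ∀ d ∈ D.points, x ∈ ball d D.radius → d = c := fun d hd hxd ↦
    D.pairwiseDisjoint.elim_set hd hc x hxd hx
  conv_lhs => rw [← graft_selfSimilarSet]
  simp only [graft, mem_union, Set.mem_sdiff, mem_iUnion, mem_inter_iff, mem_preimage, exists_prop]
  constructor
  · rintro (⟨-, hout⟩ | ⟨d, hd, hxd, hzoom⟩)
    · exact absurd ⟨c, hc, hx⟩ hout
    · rwa [← hunique d hd hxd]
  · exact fun hzoom ↦ .inr ⟨c, hc, hx, hzoom⟩

lemma mem_selfSimilarSet_iff_neg_of_bound_lt (hx : D.bound < |x|) :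
    x ∈ D.selfSimilarSet R ↔ x < 0 :=
  (mem_selfSimilarSet_iff_of_forall_notMem_ball (D.notMem_ball_of_bound_lt x hx)).trans
    (D.mem_iff_of_bound_lt x hx)

lemma nontrivialSet_selfSimilarSet : NontrivialSet (D.selfSimilarSet R) :=
  nontrivialSet_of_eventually_cobounded <|
    (tendsto_norm_cobounded_atTop.eventually_gt_atTop D.bound).mono fun _ ↦
      mem_selfSimilarSet_iff_neg_of_bound_lt

lemma abs_zoom (hc : c ∈ D.points) (hR : 0 < R) : |D.zoom R c x| = R * |x - c| := by
  rw [zoom, abs_mul, abs_mul, D.abs_sign c hc, mul_one, abs_of_pos hR]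

-- Each pasted copy is a half-line outside its own core, which is how `C` looks there already.
lemma mem_selfSimilarSet_iff_of_forall_lt_abs_sub (hR : 0 < R)
    (hx : ∀ c ∈ D.points, D.bound / R < |x - c|) : x ∈ D.selfSimilarSet R ↔ x ∈ C := by
  by_cases hball : ∀ c ∈ D.points, x ∉ ball c D.radius
  · exact mem_selfSimilarSet_iff_of_forall_notMem_ball hball
  push Not at hball
  obtain ⟨c, hc, hxc⟩ := hball
  have hne : x ≠ c :=
    sub_ne_zero.1 (abs_pos.1 ((div_pos D.bound_pos hR).trans (hx c hc)))
  have hfar : D.bound < |D.zoom R c x| := by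
    rw [abs_zoom hc hR, ← div_lt_iff₀' hR]
    exact hx c hc
  calc x ∈ D.selfSimilarSet R
    _ ↔ D.zoom R c x ∈ D.selfSimilarSet R := mem_selfSimilarSet_iff_zoom_mem hc hxc
    _ ↔ D.zoom R c x < 0 := mem_selfSimilarSet_iff_neg_of_bound_lt hfar
    _ ↔ D.sign c * (x - c) < 0 := by
      rw [zoom, mul_assoc]
      exact smul_neg_iff_of_pos_left hR
    _ ↔ x ∈ C := (D.mem_iff_of_mem_ball c hc x hxc hne).symm

lemma exists_abs_sub_le_of_isBalanced (hR : 0 < R) (hα : 0 < α) (he : 0 < e)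
    (hx : IsBalanced (D.selfSimilarSet R) α e x) : ∃ c ∈ D.points, |x - c| ≤ D.bound / R := by
  by_contra! hfar
  have hagree : ∀ᶠ y in 𝓝[≠] x, y ∈ D.selfSimilarSet R ↔ y ∈ C := by
    have hopen : ∀ᶠ y in 𝓝 x, ∀ c ∈ D.points, D.bound / R < |y - c| :=
      (eventually_all_finset _).2 fun c hc ↦
        (by fun_prop : Continuous fun y ↦ |y - c|).continuousAt.eventually_const_lt (hfar c hc)
    exact nhdsWithin_le_nhds (hopen.mono fun y ↦ mem_selfSimilarSet_iff_of_forall_lt_abs_sub hR)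
  have hxpoints : x ∈ D.points := (D.mem_points x).2
    ⟨((hx.frequently_mem hα he).and_eventually hagree).mono fun y hy ↦ hy.2.1 hy.1,
      ((hx.frequently_notMem hα he).and_eventually hagree).mono fun y hy ↦ mt hy.2.2 hy.1⟩
  have := hfar x hxpoints
  rw [sub_self, abs_zero] at this
  exact this.not_ge (div_pos D.bound_pos hR).le

lemma relMeasure_selfSimilarSet_zoom {ε : ℝ} (hR : 0 < R) (hc : c ∈ D.points)
    (hε : |x - c| + ε ≤ D.radius) :
    relMeasure (D.selfSimilarSet R) (D.zoom R c x) (R * ε) =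
      relMeasure (D.selfSimilarSet R) x ε := by
  have hk : |R * D.sign c| = R := by rw [abs_mul, D.abs_sign c hc, mul_one, abs_of_pos hR]
  have hball : ball x ε ⊆ ball c D.radius := ball_subset_ball' (by rw [Real.dist_eq]; linarith)
  calc relMeasure (D.selfSimilarSet R) (D.zoom R c x) (R * ε)
    _ = relMeasure (D.zoom R c ⁻¹' D.selfSimilarSet R) x ε := by
      have hsimilar := relMeasure_preimage_mul_sub (abs_pos.1 (hk.symm ▸ hR))
        (D.selfSimilarSet R) c x ε
      rw [hk] at hsimilar
      exact hsimilar.symm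
    _ = relMeasure (D.selfSimilarSet R) x ε :=
      relMeasure_congr fun y hy _ ↦ (mem_selfSimilarSet_iff_zoom_mem hc (hball hy)).symm

lemma isBalanced_zoom (hR : 0 < R) (hc : c ∈ D.points) (hxc : |x - c| ≤ D.radius / 2)
    (hx : IsBalanced (D.selfSimilarSet R) α e x) :
    IsBalanced (D.selfSimilarSet R) α (min (R * e) (R * (D.radius / 2))) (D.zoom R c x) := by
  rintro ε ⟨hε, hεe⟩
  obtain ⟨hεe, hερ⟩ := lt_min_iff.1 hεe
  rw [← div_lt_iff₀' hR] at hεe hερ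
  have hscale := relMeasure_selfSimilarSet_zoom hR hc (show |x - c| + ε / R ≤ _ by linarith)
  rw [mul_div_cancel₀ _ hR.ne'] at hscale
  rw [hscale]
  exact hx _ ⟨div_pos hε hR, hεe⟩

-- Zooming in on the nearest jump magnifies the balanced scale by `R` until it reaches the size of
-- a pasted copy.
lemma exists_isBalanced_mul_half_radius (hR : 1 < R) (hbound : D.bound / R ≤ D.radius / 2)
    (hα : 0 < α) (he : 0 < e) (hx : IsBalanced (D.selfSimilarSet R) α e x) :
    ∃ y, IsBalanced (D.selfSimilarSet R) α (R * (D.radius / 2)) y := by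
  have hR₀ : 0 < R := by positivity
  have hρ := D.radius_pos
  have hiter (n : ℕ) :
      ∃ y, IsBalanced (D.selfSimilarSet R) α (min (R ^ n * e) (R * (D.radius / 2))) y := by
    induction n with
    | zero => exact ⟨x, hx.mono (by simp)⟩
    | succ n ih =>
      obtain ⟨y, hy⟩ := ih
      obtain ⟨c, hc, hyc⟩ := exists_abs_sub_le_of_isBalanced hR₀ hα (by positivity) hy
      refine ⟨D.zoom R c y, (isBalanced_zoom hR₀ hc (hyc.trans hbound) hy).mono ?_⟩
      have hgrow : R * (D.radius / 2) ≤ R * (R * (D.radius / 2)) :=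
        le_mul_of_one_le_left (by positivity) hR.le
      rw [mul_min_of_nonneg _ _ hR₀.le, pow_succ', mul_assoc]
      exact le_min (min_le_min_left _ hgrow) (min_le_right _ _)
  obtain ⟨n, hn⟩ := pow_unbounded_of_one_lt (R * (D.radius / 2) / e) hR
  obtain ⟨y, hy⟩ := hiter n
  exact ⟨y, hy.mono (le_min ((div_lt_iff₀ he).1 hn).le le_rfl)⟩

lemma abs_relMeasure_selfSimilarSet_sub_le {ω : ℝ} (hR : 0 < R) (hω : 0 < ω)
    (hxc : |x - c| ≤ D.bound / R) :
    |relMeasure (D.selfSimilarSet R) x ω - relMeasure C c ω| ≤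
      (D.points.card + 1) * (D.bound / R) / ω := by
  set κ := D.bound / R
  have hκ₀ : 0 < κ := div_pos D.bound_pos hR
  set N := ⋃ d ∈ D.points, closedBall d κ with hN
  have hNfin : volume N ≠ ⊤ := by
    refine (measure_biUnion_lt_top D.points.finite_toSet fun d _ ↦ ?_).ne
    exact measure_closedBall_lt_top
  have hagree : ∀ z ∉ N, (z ∈ D.selfSimilarSet R ↔ z ∈ C) := fun z hz ↦
    mem_selfSimilarSet_iff_of_forall_lt_abs_sub hR (by simpa [hN, Real.dist_eq] using hz)
  have hTC : D.selfSimilarSet R ⊆ C ∪ N := fun z hz ↦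
    or_iff_not_imp_right.2 fun hzN ↦ (hagree z hzN).1 hz
  have hCT : C ⊆ D.selfSimilarSet R ∪ N := fun z hz ↦
    or_iff_not_imp_right.2 fun hzN ↦ (hagree z hzN).2 hz
  have herror : (volume.real N / 2 + |x - c|) / ω ≤ (D.points.card + 1) * κ / ω := by
    have := measureReal_biUnion_closedBall_le D.points hκ₀.le
    gcongr
    linarith
  have hupper := relMeasure_le_add_of_subset_union (x := x) (y := c) hω hTC hNfin
  have hlower := relMeasure_le_add_of_subset_union (x := c) (y := x) hω hCT hNfin
  rw [abs_sub_comm c x] at hlower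
  exact abs_sub_le_iff.2 ⟨by linarith, by linarith⟩

lemma eventually_exists_relMeasure_notMem_Icc {θ γ : ℝ} (hγ : 0 < γ)
    (hC : ∀ c ∈ D.points, ∃ ω > 0, relMeasure C c ω ∉ Icc θ (1 - θ)) :
    ∀ᶠ R in atTop, ∀ c ∈ D.points, ∃ ω ∈ Ioo 0 (R * (D.radius / 2)),
      ∀ x, |x - c| ≤ D.bound / R →
        relMeasure (D.selfSimilarSet R) x ω ∉ Icc (θ + γ) (1 - (θ + γ)) := by
  refine (eventually_all_finset _).2 fun c hc ↦ ?_
  obtain ⟨ω, hω, hωC⟩ := hC c hc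
  have hsmall : ∀ᶠ R in atTop, (D.points.card + 1) * (D.bound / R) / ω < γ := by
    have : Tendsto (fun R ↦ (D.points.card + 1) * (D.bound / R) / ω) atTop
        (𝓝 ((D.points.card + 1) * 0 / ω)) :=
      ((tendsto_id.const_div_atTop D.bound).const_mul _).div_const ω
    exact this.eventually_lt_const (by simpa using hγ)
  have hlarge : ∀ᶠ R in atTop, ω < R * (D.radius / 2) :=
    (tendsto_id.atTop_mul_const (half_pos D.radius_pos)).eventually_gt_atTop ω
  filter_upwards [hsmall, hlarge, eventually_gt_atTop 0] with R hsmall hlarge hR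
  refine ⟨ω, ⟨hω, hlarge⟩, fun x hxc hx ↦ hωC ?_⟩
  have hclose := abs_le.1 ((abs_relMeasure_selfSimilarSet_sub_le hR hω hxc).trans hsmall.le)
  exact ⟨by linarith [hx.1], by linarith [hx.2]⟩

theorem exists_scale_forall_not_isBalanced {θ α : ℝ} (hα : 0 < α) (hθα : θ < α)
    (hC : ∀ c ∈ D.points, ∃ ω > 0, relMeasure C c ω ∉ Icc θ (1 - θ)) :
    ∃ R, ∀ x, ∀ e > 0, ¬ IsBalanced (D.selfSimilarSet R) α e x := by
  have hbound : ∀ᶠ R in atTop, D.bound / R ≤ D.radius / 2 :=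
    ((tendsto_id.const_div_atTop D.bound).eventually_lt_const (half_pos D.radius_pos)).mono
      fun _ ↦ le_of_lt
  obtain ⟨R, hnotMem, hbound, hR⟩ := ((eventually_exists_relMeasure_notMem_Icc (sub_pos.2 hθα)
    hC).and (hbound.and (eventually_gt_atTop 1))).exists
  have hρ := D.radius_pos
  refine ⟨R, fun x e he hx ↦ ?_⟩
  obtain ⟨y, hy⟩ := exists_isBalanced_mul_half_radius hR hbound hα he hx
  obtain ⟨c, hc, hyc⟩ :=
    exists_abs_sub_le_of_isBalanced (by positivity) hα (by positivity) hy
  obtain ⟨ω, hω, hωy⟩ := hnotMem c hc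
  exact hωy y hyc (by simpa using hy ω hω)

end JumpData

theorem exists_set_without_exceptional_point_of_config_general {C : Set ℝ}
    (hC : (frontier C).Finite) (hfar : ∀ᶠ x in cobounded ℝ, x ∈ C ↔ x < 0) {δ : ℝ}
    (hδ : ∀ c ∈ frontier C, ∃ ω > 0, relMeasure C c ω ∉ Icc δ (1 - δ)) :
    ∃ S : Set ℝ, MeasurableSet S ∧ NontrivialSet S ∧ ∀ p : ℝ, ¬ IsExceptionalPoint S δ p := by
  obtain ⟨θ, hθδ, hθ⟩ := exists_lt_forall_relMeasure_notMem_Icc hC hδ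
  have hδ₀ : 0 < δ := by
    obtain ⟨c, hc⟩ := (nontrivialSet_of_eventually_cobounded hfar).nonempty_frontier
    obtain ⟨ω, hω, hωc⟩ := hδ c hc
    exact pos_of_relMeasure_notMem_Icc hω hωc
  obtain ⟨α, hα, hαδ⟩ := exists_between (max_lt hθδ hδ₀)
  obtain ⟨D⟩ := JumpData.nonempty_of_finite_frontier hC hfar
  obtain ⟨R, hR⟩ := D.exists_scale_forall_not_isBalanced ((le_max_right _ _).trans_lt hα)
    ((le_max_left _ _).trans_lt hα)
    fun c hc ↦ hθ c (jumpSet_subset_frontier ((D.mem_points c).1 hc))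
  refine ⟨D.selfSimilarSet R,
    D.measurableSet_selfSimilarSet R (measurableSet_of_countable_frontier hC.countable),
    JumpData.nontrivialSet_selfSimilarSet, fun p hp ↦ ?_⟩
  obtain ⟨e, he, hbalanced⟩ := hp.exists_isBalanced hαδ
  exact hR p e he hbalanced

namespace Config

variable (C : Config)

lemma finite_endpoints : C.endpoints.Finite :=
  ((finite_range _).union (finite_range _)).insert _

lemma frontier_carrier_subset_endpoints : frontier C.carrier ⊆ C.endpoints := by
  have hopen : IsOpen C.carrier := isOpen_Iio.union (isOpen_iUnion fun _ ↦ isOpen_Ioo)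
  have hclosure : closure C.carrier = Iic 0 ∪ ⋃ i, Icc (C.a i) (C.b i) := by
    simp only [carrier, closure_union, closure_Iio, closure_iUnion_of_finite,
      closure_Ioo (C.hab _).ne]
  rw [hopen.frontier_eq, hclosure]
  rintro x ⟨hx | hx, hxC⟩
  · exact .inl (le_antisymm hx (not_lt.1 fun h ↦ hxC (.inl h)))
  · obtain ⟨i, hi⟩ := mem_iUnion.1 hx
    have hxi : x ∉ Ioo (C.a i) (C.b i) := fun h ↦ hxC (.inr (mem_iUnion.2 ⟨i, h⟩))
    rcases eq_endpoints_or_mem_Ioo_of_mem_Icc hi with rfl | rfl | h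
    · exact .inr (.inl ⟨i, rfl⟩)
    · exact .inr (.inr ⟨i, rfl⟩)
    · exact absurd h hxi

lemma eventually_mem_carrier_iff_neg : ∀ᶠ x in cobounded ℝ, x ∈ C.carrier ↔ x < 0 := by
  have hbounded : IsBounded (⋃ i, Ioo (C.a i) (C.b i)) :=
    isBounded_iUnion.2 fun i ↦ isBounded_Ioo _ _
  filter_upwards [isBounded_def.1 hbounded] with x hx
  exact or_iff_left hx

end Config

/-- If `0 ≤ δ < 1/2` and `C` is a configuration such that every endpoint `c` of `C` admits a
radius `ω > 0` with `λ(C | I_ω(c)) ∉ [δ, 1-δ]`, then for every `τ > 0` there is a nontrivial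
measurable set `S ⊆ ℝ` having no `(δ+τ)`-exceptional point. -/
theorem exists_set_without_exceptional_point_of_config
    (δ : ℝ) (hδ0 : 0 ≤ δ) (hδ1 : δ < 1 / 2)
    (C : Config)
    (hC : ∀ c ∈ C.endpoints, ∃ ω > 0, relMeasure C.carrier c ω ∉ Icc δ (1 - δ))
    (τ : ℝ) (hτ : 0 < τ) :
    ∃ S : Set ℝ, MeasurableSet S ∧ NontrivialSet S ∧
      ∀ p : ℝ, ¬ IsExceptionalPoint S (δ + τ) p := by
  obtain ⟨S, hS, hS', hexc⟩ := exists_set_without_exceptional_point_of_config_general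
    (C.finite_endpoints.subset C.frontier_carrier_subset_endpoints)
    C.eventually_mem_carrier_iff_neg fun c hc ↦ hC c (C.frontier_carrier_subset_endpoints hc)
  exact ⟨S, hS, hS', fun p hp ↦ hexc p (hp.mono (by linarith))⟩
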